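/- Distance sets of winning sets: Let n ∈ ℕ, let A be a diagonal (n×n)-matrix with diagonal entries β₁₁,…,β_nn ∈ (0,1/5), set β_max = max_j β_jj, and let α, c ∈ (0,1) and ρ₂ > 0. Assume there exists δ ∈ (0,1) such that 2·α^c ≤ δ²(1 − (∏_{j=1}^n β_jj)^{1−c}) and 3^{−n}∏_{j=1}^n (1 − 5β_jj^{⌊δ(2^{1/c}α)^{−1}⌋}) > 8^n(1 + 2^{2n+1})δ (that is, M(α,A,c,ρ₂) ≥ 2). Then for all η₁,…,η_n ∈ [0,1], all λ ∈ (0,(1 − β_max)ρ₂), all y ∈ ℝ^n and all S ∈ 𝒮(α,A,c,ρ₂), the set S ∩ B[y,ρ₂] contains two points x = (x⁽¹⁾,…,x⁽ⁿ⁾) and x' = (x'⁽¹⁾,…,x'⁽ⁿ⁾) satisfying |x⁽ʲ⁾ − x'⁽ʲ⁾| = η_j·λ for all j ∈ {1,…,n}. -/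

import Mathlib

open scoped ENNReal

/-- The axis-parallel closed box `A^t(B[0,r]) + y`, where `A` is the diagonal matrix with
diagonal entries `β j`: the set of `x` with `|x j - y j| ≤ (β j)^t * r` for every `j`. -/
def gameBox {n : ℕ} (β : Fin n → ℝ) (t r : ℝ) (y : Fin n → ℝ) : Set (Fin n → ℝ) :=
  {x | ∀ j, |x j - y j| ≤ β j ^ t * r}

/-- A legal move of Player II on turn `m + 1` (turns are indexed from `1` in the paper) of the
`(α, A, c, ρ₂, ρ₁)`-potential game: an at most countable collection of pairs `(q, y)` with
`q ≥ 1`, satisfying, when `c > 0`,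
`Σ (∏_j β_j^q)^c ≤ (α ∏_j β_j^(m+1))^c`, and, when `c = 0`, consisting of at most one pair
`(q, y)`, which must satisfy `∏_j β_j^q ≤ α ∏_j β_j^(m+1)`. The empty collection (a skip) is
always legal. -/
def LegalMove {n : ℕ} (β : Fin n → ℝ) (α c : ℝ) (m : ℕ)
    (M : Set (ℝ × (Fin n → ℝ))) : Prop :=
  M.Countable ∧ (∀ p ∈ M, 1 ≤ p.1) ∧
    (if 0 < c then
      ∑' p : M, ENNReal.ofReal ((∏ j, β j ^ p.1.1) ^ c)
        ≤ ENNReal.ofReal ((α * ∏ j, β j ^ (m + 1 : ℝ)) ^ c)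
    else
      M.Subsingleton ∧ ∀ p ∈ M, (∏ j, β j ^ p.1) ≤ α * ∏ j, β j ^ (m + 1 : ℝ))

/-- `S` is a winning set for Player II in the `(α, A, c, ρ₂, ρ₁)`-potential game, where `A` is
the diagonal matrix with diagonal entries `β j`.  Player I's play on turn `m + 1` is
`U_{m+1} = A^{m+1}(B[0,r]) + b m` with `ρ₂ ≤ r ≤ ρ₁` and `U_{m+2} ⊆ U_{m+1}`; a strategy for
Player II assigns to every finite history (the radius `r` together with the centres
`b 0, …, b m` of Player I's plays so far) a collection of pairs `(q, y)`, which must be a legal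
move whenever the history is legal.  The strategy is winning for `S` if for every legal infinite
play in which Player II follows it, every point `x` of `⋂ U_m` which avoids the deleted region
`⋃_m ⋃_{(q,y)} (A^q(B[0,r]) + y)` lies in `S`. -/
def IsWinning {n : ℕ} (β : Fin n → ℝ) (α c ρ₂ ρ₁ : ℝ) (S : Set (Fin n → ℝ)) : Prop :=
  ∃ σ : ℝ → (m : ℕ) → (Fin (m + 1) → (Fin n → ℝ)) → Set (ℝ × (Fin n → ℝ)),
    (∀ (r : ℝ) (m : ℕ) (b : Fin (m + 1) → (Fin n → ℝ)),
      ρ₂ ≤ r → r ≤ ρ₁ →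
      (∀ i : Fin m,
        gameBox β ((i : ℕ) + 2 : ℝ) r (b i.succ) ⊆ gameBox β ((i : ℕ) + 1 : ℝ) r (b i.castSucc)) →
      LegalMove β α c m (σ r m b)) ∧
    (∀ (r : ℝ) (b : ℕ → (Fin n → ℝ)),
      ρ₂ ≤ r → r ≤ ρ₁ →
      (∀ m : ℕ, gameBox β ((m : ℕ) + 2 : ℝ) r (b (m + 1)) ⊆ gameBox β ((m : ℕ) + 1 : ℝ) r (b m)) →
      ∀ x : Fin n → ℝ, (∀ m : ℕ, x ∈ gameBox β ((m : ℕ) + 1 : ℝ) r (b m)) →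
        x ∉ ⋃ (m : ℕ), ⋃ p ∈ σ r m (fun i : Fin (m + 1) => b (i : ℕ)), gameBox β p.1 r p.2 →
        x ∈ S)

/-- The family `𝒮(α, A, c, ρ₂)` of sets that are `(α, A, c, ρ₂, ρ₁)`-winning for some
`ρ₁ ≥ ρ₂`. -/
def winFamily {n : ℕ} (β : Fin n → ℝ) (α c ρ₂ : ℝ) : Set (Set (Fin n → ℝ)) :=
  {S | ∃ ρ₁ : ℝ, ρ₂ ≤ ρ₁ ∧ IsWinning β α c ρ₂ ρ₁ S}

/-!
Translating a winning set does not change its parameters, and a finite intersection of winning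
sets is won by playing all strategies at once, at the cost of adding the weights `αᶜ`. So if `S`
is winning, then `⋂ᵢ (S - vᵢ)` is winning with `αᶜ` multiplied by the number of vectors `vᵢ`, and
it suffices to find one point of a winning set in a box: its translates by the `vᵢ` lie in `S`.

To find it we play against the strategy in rounds of `N = ⌊δ / αᶜ⌋` turns. Suppose that the boxes
deleted so far which meet Player I's current box have relative mass at most `δ`, and let Player I
steer towards a box chosen from a grid `N` levels deeper. Count a deleted box of relative volume
`u` with weight `min 1 (uᶜ / δ)`. Summed over all grid boxes it meets, a box contributes at most
`5ⁿ max 1 u` times its weight, so the old boxes and the boxes deleted during the round together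
contribute less than the number of grid boxes. Some grid box therefore has total weight below
`1`. Then no weight is truncated there, and the deleted boxes meeting it again have relative mass
at most `δ`. Repeating this forever, the limit point lies in no deleted box: its relative volume
would grow beyond `1`, hence its mass beyond `δ`.
-/

namespace PotentialGame

variable {n : ℕ} {β : Fin n → ℝ} {r : ℝ}

section Boxes

variable {s t : ℝ} {x y z : Fin n → ℝ}

lemma add_mem_gameBox_add (v : Fin n → ℝ) :
    x + v ∈ gameBox β t r (y + v) ↔ x ∈ gameBox β t r y := by
  simp [gameBox]

lemma gameBox_add_subset_gameBox_add (v : Fin n → ℝ) (h : gameBox β s r y ⊆ gameBox β t r z) :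
    gameBox β s r (y + v) ⊆ gameBox β t r (z + v) := by
  intro x hx
  rw [← sub_add_cancel x v, add_mem_gameBox_add] at hx ⊢
  exact h hx

lemma gameBox_eq_Icc : gameBox β t r y =
    Set.Icc (fun j => y j - β j ^ t * r) (fun j => y j + β j ^ t * r) := by
  ext x
  simp only [gameBox, Set.mem_ofPred_eq, Set.mem_Icc, Pi.le_def, ← forall_and]
  exact forall_congr' fun j => abs_sub_le_iff.trans
    ⟨fun h => ⟨by linarith [h.2], by linarith [h.1]⟩,
      fun h => ⟨by linarith [h.2], by linarith [h.1]⟩⟩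

lemma mem_gameBox_self (hβ : ∀ j, 0 ≤ β j) (hr : 0 ≤ r) : y ∈ gameBox β t r y := fun j => by
  have := hβ j
  rw [sub_self, abs_zero]
  positivity

lemma gameBox_subset_gameBox (h : ∀ j, |y j - z j| + β j ^ s * r ≤ β j ^ t * r) :
    gameBox β s r y ⊆ gameBox β t r z := fun x hx j => by
  linarith [abs_sub_le (x j) (y j) (z j), hx j, h j]

lemma abs_sub_le_of_gameBox_inter_nonempty
    (h : (gameBox β s r y ∩ gameBox β t r z).Nonempty) (j : Fin n) :
    |y j - z j| ≤ (β j ^ s + β j ^ t) * r := by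
  obtain ⟨x, hxy, hxz⟩ := h
  have := hxy j
  rw [abs_sub_comm] at this
  linarith [abs_sub_le (y j) (x j) (z j), hxz j]

end Boxes

section Mass

variable {c K t : ℝ} {x : Fin n → ℝ} {p : ℝ × (Fin n → ℝ)} {M M' : Set (ℝ × (Fin n → ℝ))}

/-- The volume of the box `A^q(B[0,r]) + y` encoded by `p = (q, y)`, relative to the volume of a
box `A^t(B[0,r])` of level `t`. -/
noncomputable def relVol (β : Fin n → ℝ) (t : ℝ) (p : ℝ × (Fin n → ℝ)) : ℝ :=
  ∏ j, β j ^ (p.1 - t)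

/-- The total `c`-weight of a collection of boxes, relative to level `t`. Measuring relative to the
level of Player I's current box makes the rules of the game independent of the turn. -/
noncomputable def mass (β : Fin n → ℝ) (c t : ℝ) (M : Set (ℝ × (Fin n → ℝ))) : ℝ≥0∞ :=
  ∑' p : M, ENNReal.ofReal (relVol β t p ^ c)

/-- The boxes of the collection `M` which meet the box of level `t` centred at `x`. -/
def meeting (β : Fin n → ℝ) (r t : ℝ) (x : Fin n → ℝ) (M : Set (ℝ × (Fin n → ℝ))) :
    Set (ℝ × (Fin n → ℝ)) :=
  {p | p ∈ M ∧ (gameBox β p.1 r p.2 ∩ gameBox β t r x).Nonempty}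

/-- The mass of the boxes of `M` meeting the box of level `t` centred at `x`, in units of `K` and
with the contribution of each single box truncated at `1`. -/
noncomputable def truncMass (β : Fin n → ℝ) (r c K t : ℝ) (x : Fin n → ℝ)
    (M : Set (ℝ × (Fin n → ℝ))) : ℝ≥0∞ :=
  ∑' p : meeting β r t x M, ENNReal.ofReal (min 1 (relVol β t p ^ c / K))

lemma relVol_pos (hβ : ∀ j, 0 < β j) : 0 < relVol β t p :=
  Finset.prod_pos fun j _ => Real.rpow_pos_of_pos (hβ j) _

lemma relVol_eq_prod_rpow (hβ : ∀ j, 0 ≤ β j) : relVol β t p = (∏ j, β j) ^ (p.1 - t) :=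
  Real.finsetProd_rpow _ _ (fun j _ => hβ j) _

lemma relVol_add_natCast (hβ : ∀ j, 0 < β j) (d : ℕ) :
    relVol β (t + d) p = ((∏ j, β j) ^ d)⁻¹ * relVol β t p := by
  have hB : 0 < ∏ j, β j := Finset.prod_pos fun j _ => hβ j
  rw [relVol_eq_prod_rpow fun j => (hβ j).le, relVol_eq_prod_rpow fun j => (hβ j).le,
    ← sub_sub, Real.rpow_sub hB _ (d : ℝ), Real.rpow_natCast, div_eq_inv_mul]

lemma relVol_rpow_le_of_mass_le {w : ℝ} (hw : 0 ≤ w) (hM : mass β c t M ≤ ENNReal.ofReal w)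
    (hp : p ∈ M) : relVol β t p ^ c ≤ w :=
  (ENNReal.ofReal_le_ofReal_iff hw).1 <|
    (ENNReal.le_tsum (f := fun p : M => ENNReal.ofReal (relVol β t p ^ c)) ⟨p, hp⟩).trans hM

lemma mass_mono (h : M ⊆ M') : mass β c t M ≤ mass β c t M' :=
  ENNReal.tsum_mono_subtype (fun p => ENNReal.ofReal (relVol β t p ^ c)) h

lemma truncMass_eq_tsum_indicator : truncMass β r c K t x M =
    ∑' p, (meeting β r t x M).indicator
      (fun p => ENNReal.ofReal (min 1 (relVol β t p ^ c / K))) p :=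
  tsum_subtype (meeting β r t x M) fun p => ENNReal.ofReal (min 1 (relVol β t p ^ c / K))

lemma truncMass_union_le :
    truncMass β r c K t x (M ∪ M') ≤ truncMass β r c K t x M + truncMass β r c K t x M' := by
  let f := fun p => ENNReal.ofReal (min 1 (relVol β t p ^ c / K))
  refine (ENNReal.tsum_mono_subtype f ?_).trans (ENNReal.tsum_union_le f _ _)
  rintro p ⟨hp | hp, hmeet⟩
  exacts [Or.inl ⟨hp, hmeet⟩, Or.inr ⟨hp, hmeet⟩]

lemma truncMass_biUnion_le {ι : Type*} (I : Finset ι) (M : ι → Set (ℝ × (Fin n → ℝ))) :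
    truncMass β r c K t x (⋃ i ∈ I, M i) ≤ ∑ i ∈ I, truncMass β r c K t x (M i) := by
  let f := fun p => ENNReal.ofReal (min 1 (relVol β t p ^ c / K))
  refine (ENNReal.tsum_mono_subtype f ?_).trans (ENNReal.tsum_biUnion_le f I _)
  rintro p ⟨hp, hmeet⟩
  obtain ⟨i, hi, hp⟩ := Set.mem_iUnion₂.1 hp
  exact Set.mem_iUnion₂.2 ⟨i, hi, hp, hmeet⟩

-- If the truncated sum is less than `1`, then no term has been truncated.
lemma mass_meeting_le_of_truncMass_lt_one (hK : 0 < K)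
    (h : truncMass β r c K t x M < 1) : mass β c t (meeting β r t x M) ≤ ENNReal.ofReal K := by
  have hterm : ∀ p : meeting β r t x M, ENNReal.ofReal (relVol β t p ^ c) =
      ENNReal.ofReal K * ENNReal.ofReal (min 1 (relVol β t p ^ c / K)) := by
    intro p
    have hlt : ENNReal.ofReal (min 1 (relVol β t p ^ c / K)) < ENNReal.ofReal 1 := by
      rw [ENNReal.ofReal_one]
      exact (ENNReal.le_tsum p).trans_lt h
    rw [ENNReal.ofReal_lt_ofReal_iff one_pos, min_lt_iff] at hlt
    rw [min_eq_right (hlt.resolve_left (lt_irrefl _)).le, ← ENNReal.ofReal_mul hK.le,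
      mul_div_cancel₀ _ hK.ne']
  calc mass β c t (meeting β r t x M) = ENNReal.ofReal K * truncMass β r c K t x M := by
        rw [mass, tsum_congr hterm, ENNReal.tsum_mul_left, truncMass]
    _ ≤ ENNReal.ofReal K * 1 := by gcongr
    _ = ENNReal.ofReal K := mul_one _

end Mass

section Grid

variable {c K t w : ℝ} {x : Fin n → ℝ} {p : ℝ × (Fin n → ℝ)} {M : Set (ℝ × (Fin n → ℝ))}

/-- The point with index `k` of the grid through `x` whose mesh is the half side length of the
boxes of level `t`. -/
noncomputable def gridPoint (β : Fin n → ℝ) (r t : ℝ) (x : Fin n → ℝ) (k : Fin n → ℤ) :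
    Fin n → ℝ :=
  fun j => x j + k j * (β j ^ t * r)

/-- The index of a point of the grid of level `t` closest to the point with index `k` of the grid
of level `t + 1`. -/
noncomputable def coarsen (β : Fin n → ℝ) (k : Fin n → ℤ) : Fin n → ℤ :=
  fun j => round (β j * k j)

/-- The grid indices, `N` levels below a box, from which Player I chooses a box to steer to. -/
noncomputable def leaves (β : Fin n → ℝ) (N : ℕ) : Finset (Fin n → ℤ) :=
  Fintype.piFinset fun j => Finset.Icc (-⌊(β j ^ N)⁻¹ / 4⌋) ⌊(β j ^ N)⁻¹ / 4⌋

lemma gridPoint_zero : gridPoint β r t x 0 = x := by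
  ext j
  simp [gridPoint]

lemma gameBox_gridPoint_subset (hβ : ∀ j, β j ∈ Set.Ioc (0 : ℝ) (1 / 2)) (hr : 0 ≤ r)
    (k : Fin n → ℤ) : gameBox β (t + 1) r (gridPoint β r (t + 1) x k) ⊆
      gameBox β t r (gridPoint β r t x (coarsen β k)) := by
  refine gameBox_subset_gameBox fun j => ?_
  obtain ⟨hpos, hle⟩ := hβ j
  have hmesh : 0 ≤ β j ^ t * r := by positivity
  have hround := abs_sub_round (β j * k j)
  have hdiff : gridPoint β r (t + 1) x k j - gridPoint β r t x (coarsen β k) j =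
      (β j * k j - round (β j * k j)) * (β j ^ t * r) := by
    simp only [gridPoint, coarsen, Real.rpow_add_one hpos.ne']
    ring
  rw [hdiff, abs_mul, abs_of_nonneg hmesh, Real.rpow_add_one hpos.ne']
  nlinarith

-- `3 / 4` is the fixed point of `u ↦ u / 3 + 1 / 2`, where `1 / 2` is the rounding error.
lemma abs_coarsen_iterate_lt (hβ : ∀ j, β j ∈ Set.Ioc (0 : ℝ) (1 / 3)) (k : Fin n → ℤ) (d : ℕ)
    (j : Fin n) : |((coarsen β)^[d] k j : ℝ)| < β j ^ d * |(k j : ℝ)| + 3 / 4 := by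
  induction d with
  | zero => simp
  | succ d ih =>
    obtain ⟨hpos, hle⟩ := hβ j
    rw [Function.iterate_succ_apply']
    set l := (coarsen β)^[d] k
    have hround : |(round (β j * l j) : ℝ)| ≤ β j * |(l j : ℝ)| + 1 / 2 := by
      have := abs_sub_abs_le_abs_sub (round (β j * l j) : ℝ) (β j * l j)
      rw [abs_sub_comm, abs_mul, abs_of_pos hpos] at this
      linarith [abs_sub_round (β j * l j)]
    calc |(coarsen β l j : ℝ)| ≤ β j * |(l j : ℝ)| + 1 / 2 := hround
      _ < β j * (β j ^ d * |(k j : ℝ)| + 3 / 4) + 1 / 2 := by gcongr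
      _ ≤ β j ^ (d + 1) * |(k j : ℝ)| + 3 / 4 := by rw [pow_succ]; linarith

lemma abs_le_of_mem_leaves {N : ℕ} {k : Fin n → ℤ} (hk : k ∈ leaves β N) (j : Fin n) :
    |(k j : ℝ)| ≤ (β j ^ N)⁻¹ / 4 := by
  have := Finset.mem_Icc.1 (Fintype.mem_piFinset.1 hk j)
  exact_mod_cast Int.le_floor.1 (abs_le.2 this)

lemma abs_coarsen_iterate_lt_of_mem_leaves (hβ : ∀ j, β j ∈ Set.Ioc (0 : ℝ) (1 / 3)) {N i : ℕ}
    (hi : i ≤ N) {k : Fin n → ℤ} (hk : k ∈ leaves β N) (j : Fin n) :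
    |((coarsen β)^[N - i] k j : ℝ)| < (β j ^ i)⁻¹ / 4 + 3 / 4 := by
  have hpos := (hβ j).1
  refine (abs_coarsen_iterate_lt hβ k (N - i) j).trans_le ?_
  have hscale : β j ^ (N - i) * (β j ^ N)⁻¹ = (β j ^ i)⁻¹ := by
    rw [pow_sub₀ _ hpos.ne' hi]
    field_simp
  calc β j ^ (N - i) * |(k j : ℝ)| + 3 / 4
      ≤ β j ^ (N - i) * ((β j ^ N)⁻¹ / 4) + 3 / 4 := by
        gcongr
        exact abs_le_of_mem_leaves hk j
    _ = (β j ^ i)⁻¹ / 4 + 3 / 4 := by rw [← mul_div_assoc, hscale]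

lemma coarsen_iterate_eq_zero (hβ : ∀ j, β j ∈ Set.Ioc (0 : ℝ) (1 / 3)) {N : ℕ}
    {k : Fin n → ℤ} (hk : k ∈ leaves β N) : (coarsen β)^[N] k = 0 := by
  ext j
  have hlt := abs_coarsen_iterate_lt_of_mem_leaves hβ N.zero_le hk j
  norm_num at hlt
  exact Int.abs_lt_one_iff.1 (by exact_mod_cast hlt)

lemma card_le_two_mul_add_one {s : Finset ℤ} {a R : ℝ} (hR : 0 ≤ R)
    (h : ∀ k ∈ s, |(k : ℝ) - a| ≤ R) : (s.card : ℝ) ≤ 2 * R + 1 := by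
  have hsub : s ⊆ Finset.Icc ⌈a - R⌉ ⌊a + R⌋ := fun k hk => by
    obtain ⟨hl, hu⟩ := abs_le.1 (h k hk)
    exact Finset.mem_Icc.2 ⟨Int.ceil_le.2 (by linarith), Int.le_floor.2 (by linarith)⟩
  have hcard : (s.card : ℤ) ≤ max (⌊a + R⌋ + 1 - ⌈a - R⌉) 0 := by
    rw [← Int.toNat_eq_max, ← Int.card_Icc]
    exact_mod_cast Finset.card_le_card hsub
  have hcard : (s.card : ℝ) ≤ max ((⌊a + R⌋ : ℝ) + 1 - ⌈a - R⌉) 0 := by exact_mod_cast hcard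
  exact hcard.trans
    (max_le (by linarith [Int.floor_le (a + R), Int.le_ceil (a - R)]) (by linarith))

lemma card_le_prod_two_mul_add_one {s : Finset (Fin n → ℤ)} {a R : Fin n → ℝ}
    (hR : ∀ j, 0 ≤ R j) (h : ∀ k ∈ s, ∀ j, |(k j : ℝ) - a j| ≤ R j) :
    (s.card : ℝ) ≤ ∏ j, (2 * R j + 1) := by
  have hsub : s ⊆ Fintype.piFinset fun j => s.image (· j) := fun k hk =>
    Fintype.mem_piFinset.2 fun j => Finset.mem_image_of_mem _ hk
  calc (s.card : ℝ) ≤ ∏ j, ((s.image (· j)).card : ℝ) := by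
        exact_mod_cast (Finset.card_le_card hsub).trans (Fintype.card_piFinset _).le
    _ ≤ ∏ j, (2 * R j + 1) := by
        refine Finset.prod_le_prod (fun _ _ => by positivity) fun j _ =>
          card_le_two_mul_add_one (a := a j) (hR j) ?_
        exact Finset.forall_mem_image.2 fun k hk => h k hk j

lemma abs_sub_div_le_of_gameBox_inter_gridPoint_nonempty (hβ : ∀ j, 0 < β j) (hr : 0 < r)
    {k : Fin n → ℤ}
    (h : (gameBox β p.1 r p.2 ∩ gameBox β t r (gridPoint β r t x k)).Nonempty) (j : Fin n) :
    |(k j : ℝ) - (p.2 j - x j) / (β j ^ t * r)| ≤ β j ^ (p.1 - t) + 1 := by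
  have hpos : 0 < β j ^ t := Real.rpow_pos_of_pos (hβ j) t
  have hmesh : 0 < β j ^ t * r := mul_pos hpos hr
  have hdiff : (k j : ℝ) - (p.2 j - x j) / (β j ^ t * r) =
      -(p.2 j - gridPoint β r t x k j) / (β j ^ t * r) := by
    simp only [gridPoint]
    field_simp
    ring
  rw [hdiff, abs_div, abs_neg, abs_of_pos hmesh, div_le_iff₀ hmesh, Real.rpow_sub (hβ j)]
  calc |p.2 j - gridPoint β r t x k j| ≤ (β j ^ p.1 + β j ^ t) * r :=
        abs_sub_le_of_gameBox_inter_nonempty h j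
    _ = (β j ^ p.1 / β j ^ t + 1) * (β j ^ t * r) := by field_simp

lemma card_meeting_gridPoint_le (hβ : ∀ j, β j ∈ Set.Ioc (0 : ℝ) 1) (hr : 0 < r)
    {s : Finset (Fin n → ℤ)}
    (h : ∀ k ∈ s, (gameBox β p.1 r p.2 ∩ gameBox β t r (gridPoint β r t x k)).Nonempty) :
    (s.card : ℝ) ≤ 5 ^ n * max 1 (relVol β t p) := by
  have hpos : ∀ j (u : ℝ), 0 < β j ^ u := fun j u => Real.rpow_pos_of_pos (hβ j).1 u
  have hcard := card_le_prod_two_mul_add_one (s := s)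
    (a := fun j => (p.2 j - x j) / (β j ^ t * r)) (R := fun j => β j ^ (p.1 - t) + 1)
    (fun j => by linarith [hpos j (p.1 - t)]) fun k hk =>
      abs_sub_div_le_of_gameBox_inter_gridPoint_nonempty (fun j => (hβ j).1) hr (h k hk)
  rcases le_total t p.1 with htp | htp
  · calc (s.card : ℝ) ≤ ∏ _j : Fin n, (5 : ℝ) := by
          refine hcard.trans (Finset.prod_le_prod (fun j _ => ?_) fun j _ => ?_)
          · linarith [hpos j (p.1 - t)]
          · linarith [Real.rpow_le_one (hβ j).1.le (hβ j).2 (sub_nonneg.2 htp)]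
      _ = 5 ^ n * 1 := by simp
      _ ≤ 5 ^ n * max 1 (relVol β t p) := by gcongr; exact le_max_left _ _
  · calc (s.card : ℝ) ≤ ∏ j, (5 * β j ^ (p.1 - t)) := by
          refine hcard.trans (Finset.prod_le_prod (fun j _ => ?_) fun j _ => ?_)
          · linarith [hpos j (p.1 - t)]
          · linarith [Real.one_le_rpow_of_pos_of_le_one_of_nonpos (hβ j).1 (hβ j).2
              (sub_nonpos.2 htp)]
      _ = 5 ^ n * relVol β t p := by rw [Finset.prod_mul_distrib, relVol]; simp
      _ ≤ 5 ^ n * max 1 (relVol β t p) := by gcongr; exact le_max_right _ _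

lemma card_image_coarsen_iterate_le (hβ : ∀ j, β j ∈ Set.Ioc (0 : ℝ) (1 / 3)) {N i : ℕ}
    (hi : i ≤ N) : (((leaves β N).image (coarsen β)^[N - i]).card : ℝ) ≤
      3 ^ n * ((∏ j, β j) ^ i)⁻¹ := by
  have hone : ∀ j, 1 ≤ (β j ^ i)⁻¹ := fun j =>
    (one_le_inv₀ (pow_pos (hβ j).1 i)).2
      (pow_le_one₀ (hβ j).1.le (by linarith [(hβ j).2]))
  calc (((leaves β N).image (coarsen β)^[N - i]).card : ℝ)
      ≤ ∏ j, (2 * ((β j ^ i)⁻¹ / 4 + 3 / 4) + 1) := by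
        refine card_le_prod_two_mul_add_one (a := 0) (fun j => by linarith [hone j]) ?_
        refine Finset.forall_mem_image.2 fun k hk j => ?_
        simpa using (abs_coarsen_iterate_lt_of_mem_leaves hβ hi hk j).le
    _ ≤ ∏ j, (3 * (β j ^ i)⁻¹) :=
        Finset.prod_le_prod (fun j _ => by linarith [hone j]) fun j _ => by linarith [hone j]
    _ = 3 ^ n * ((∏ j, β j) ^ i)⁻¹ := by
        simp [Finset.prod_mul_distrib, Finset.prod_inv_distrib, Finset.prod_pow]

lemma le_card_leaves (hβ : ∀ j, 0 < β j) (N : ℕ) :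
    (1 / 4) ^ n * ((∏ j, β j) ^ N)⁻¹ ≤ ((leaves β N).card : ℝ) := by
  have hside : ∀ u : ℝ, 0 ≤ u → u ≤ ((Finset.Icc (-⌊u⌋) ⌊u⌋).card : ℝ) := fun u hu => by
    have hfloor : (0 : ℝ) ≤ ⌊u⌋ := by exact_mod_cast Int.floor_nonneg.2 hu
    have hcard : (⌊u⌋ + 1 - -⌊u⌋ : ℝ) ≤ ((Finset.Icc (-⌊u⌋) ⌊u⌋).card : ℝ) := by
      rw [Int.card_Icc]
      exact_mod_cast Int.self_le_toNat _
    linarith [Int.lt_floor_add_one u]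
  calc (1 / 4) ^ n * ((∏ j, β j) ^ N)⁻¹ = ∏ j, (β j ^ N)⁻¹ / 4 := by
        rw [Finset.prod_div_distrib, Finset.prod_inv_distrib, Finset.prod_pow]
        simp [div_eq_mul_inv, mul_comm]
    _ ≤ ∏ j, ((Finset.Icc (-⌊(β j ^ N)⁻¹ / 4⌋) ⌊(β j ^ N)⁻¹ / 4⌋).card : ℝ) := by
        have h0 : ∀ j, 0 ≤ (β j ^ N)⁻¹ / 4 := fun j => by have := hβ j; positivity
        exact Finset.prod_le_prod (fun j _ => h0 j) fun j _ => hside _ (h0 j)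
    _ = ((leaves β N).card : ℝ) := by rw [leaves, Fintype.card_piFinset]; push_cast; rfl

end Grid

section Averaging

variable {c K t w : ℝ} {x : Fin n → ℝ} {p : ℝ × (Fin n → ℝ)} {M : Set (ℝ × (Fin n → ℝ))}

lemma max_one_mul_min_one_div_le {u U : ℝ} (hu : 0 < u) (huU : u ≤ U) (hK : 0 < K) (hc : c ≤ 1) :
    max 1 u * min 1 (u ^ c / K) ≤ (U ^ (1 - c) + K⁻¹) * u ^ c := by
  have hU : 0 < U := hu.trans_le huU
  rcases le_total u 1 with h1 | h1
  · calc max 1 u * min 1 (u ^ c / K) ≤ K⁻¹ * u ^ c := by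
          rw [max_eq_left h1, one_mul, ← div_eq_inv_mul]
          exact min_le_right _ _
      _ ≤ (U ^ (1 - c) + K⁻¹) * u ^ c := by
          gcongr
          linarith [Real.rpow_nonneg hU.le (1 - c)]
  · calc max 1 u * min 1 (u ^ c / K) ≤ u := by
          rw [max_eq_right h1]
          exact mul_le_of_le_one_right hu.le (min_le_left _ _)
      _ = u ^ (1 - c) * u ^ c := by rw [← Real.rpow_add hu, sub_add_cancel, Real.rpow_one]
      _ ≤ (U ^ (1 - c) + K⁻¹) * u ^ c := by
          have := Real.rpow_le_rpow hu.le huU (sub_nonneg.2 hc)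
          gcongr
          linarith [inv_pos.2 hK]

lemma card_meeting_mul_min_le (hβ : ∀ j, β j ∈ Set.Ioc (0 : ℝ) 1) (hr : 0 < r) (hc : c ≤ 1)
    (hK : 0 < K) {d : ℕ} (hp : relVol β t p ≤ 1) {s : Finset (Fin n → ℤ)}
    (h : ∀ k ∈ s,
      (gameBox β p.1 r p.2 ∩ gameBox β (t + d) r (gridPoint β r (t + d) x k)).Nonempty) :
    s.card * min 1 (relVol β (t + d) p ^ c / K) ≤
      5 ^ n * (1 + ((∏ j, β j) ^ (1 - c)) ^ d / K) * ((∏ j, β j) ^ d)⁻¹ * relVol β t p ^ c := by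
  have hpos : ∀ j, 0 < β j := fun j => (hβ j).1
  set B := ∏ j, β j
  have hB : 0 < B := Finset.prod_pos fun j _ => hpos j
  have hvol := relVol_add_natCast (t := t) (p := p) hpos d
  have hrel : 0 < relVol β t p := relVol_pos hpos
  set V := (B ^ d)⁻¹
  have hV : 0 < V := by positivity
  have hVc : V ^ (1 - c) * V ^ c = V := by
    rw [← Real.rpow_add hV, sub_add_cancel, Real.rpow_one]
  have hVx : V ^ c = V * (B ^ (1 - c)) ^ d := by
    have hx : (B ^ (1 - c)) ^ d = (V ^ (1 - c))⁻¹ := by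
      rw [Real.inv_rpow (by positivity), inv_inv, Real.rpow_pow_comm hB.le]
    rw [hx, eq_mul_inv_iff_mul_eq₀ (by positivity), mul_comm, hVc]
  calc s.card * min 1 (relVol β (t + d) p ^ c / K)
      ≤ 5 ^ n * max 1 (relVol β (t + d) p) * min 1 (relVol β (t + d) p ^ c / K) := by
        have := relVol_pos (t := t + d) (p := p) hpos
        gcongr
        exact card_meeting_gridPoint_le hβ hr h
    _ ≤ 5 ^ n * ((V ^ (1 - c) + K⁻¹) * relVol β (t + d) p ^ c) := by
        have hle : relVol β (t + d) p ≤ V := hvol ▸ mul_le_of_le_one_right hV.le hp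
        rw [mul_assoc]
        exact mul_le_mul_of_nonneg_left (max_one_mul_min_one_div_le (relVol_pos hpos) hle hK hc)
          (by positivity)
    _ = 5 ^ n * (V ^ (1 - c) * V ^ c + V ^ c / K) * relVol β t p ^ c := by
        rw [hvol, Real.mul_rpow hV.le hrel.le]
        ring
    _ = 5 ^ n * (1 + (B ^ (1 - c)) ^ d / K) * V * relVol β t p ^ c := by
        rw [hVc, hVx]
        ring

lemma sum_truncMass_le (hβ : ∀ j, β j ∈ Set.Ioc (0 : ℝ) 1) (hr : 0 < r)
    (hc : c ∈ Set.Ioc (0 : ℝ) 1) (hK : 0 < K) (hw : w ∈ Set.Icc (0 : ℝ) 1)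
    (hM : mass β c t M ≤ ENNReal.ofReal w) (d : ℕ) (s : Finset (Fin n → ℤ)) :
    ∑ k ∈ s, truncMass β r c K (t + d) (gridPoint β r (t + d) x k) M ≤
      ENNReal.ofReal
        (5 ^ n * (1 + ((∏ j, β j) ^ (1 - c)) ^ d / K) * ((∏ j, β j) ^ d)⁻¹ * w) := by
  classical
  have hB : 0 < ∏ j, β j := Finset.prod_pos fun j _ => (hβ j).1
  set C := 5 ^ n * (1 + ((∏ j, β j) ^ (1 - c)) ^ d / K) * ((∏ j, β j) ^ d)⁻¹
  have hC : 0 ≤ C := by positivity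
  have hbox : ∀ p, ∑ k ∈ s, (meeting β r (t + d) (gridPoint β r (t + d) x k) M).indicator
      (fun p => ENNReal.ofReal (min 1 (relVol β (t + d) p ^ c / K))) p ≤
      ENNReal.ofReal C * M.indicator (fun p => ENNReal.ofReal (relVol β t p ^ c)) p := by
    intro p
    by_cases hp : p ∈ M
    · have hrel : 0 < relVol β t p := relVol_pos fun j => (hβ j).1
      have hrel1 : relVol β t p ≤ 1 := by
        rw [← Real.rpow_le_rpow_iff hrel.le one_pos.le hc.1, Real.one_rpow]
        exact (relVol_rpow_le_of_mass_le hw.1 hM hp).trans hw.2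
      simp only [Set.indicator_apply, meeting, Set.mem_ofPred_eq, hp, true_and, if_true]
      rw [← Finset.sum_filter, Finset.sum_const, nsmul_eq_mul, ← ENNReal.ofReal_natCast,
        ← ENNReal.ofReal_mul (by positivity), ← ENNReal.ofReal_mul hC]
      exact ENNReal.ofReal_le_ofReal <| card_meeting_mul_min_le hβ hr hc.2 hK hrel1
        fun k hk => (Finset.mem_filter.1 hk).2
    · simp [meeting, hp]
  calc ∑ k ∈ s, truncMass β r c K (t + d) (gridPoint β r (t + d) x k) M
      ≤ ∑' p, ENNReal.ofReal C * M.indicator (fun p => ENNReal.ofReal (relVol β t p ^ c)) p := by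
        simp_rw [truncMass_eq_tsum_indicator]
        rw [← Summable.tsum_finsetSum fun _ _ => ENNReal.summable]
        exact ENNReal.tsum_le_tsum hbox
    _ = ENNReal.ofReal C * mass β c t M := by rw [ENNReal.tsum_mul_left, ← tsum_subtype, mass]
    _ ≤ ENNReal.ofReal (C * w) := by
        rw [ENNReal.ofReal_mul hC]
        gcongr

lemma sum_comp_le_card_image_nsmul {ι κ : Type*} [DecidableEq κ] {s : Finset ι} {g : ι → κ}
    {F : κ → ι → ℝ≥0∞} {C : ℝ≥0∞} (h : ∀ k ∈ s, ∑ l ∈ s, F (g k) l ≤ C) :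
    ∑ k ∈ s, F (g k) k ≤ (s.image g).card • C :=
  calc ∑ k ∈ s, F (g k) k ≤ ∑ k ∈ s, ∑ a ∈ s.image g, F a k :=
        Finset.sum_le_sum fun k hk => Finset.single_le_sum (f := fun a => F a k)
          (fun _ _ => zero_le) (Finset.mem_image_of_mem g hk)
    _ = ∑ a ∈ s.image g, ∑ k ∈ s, F a k := Finset.sum_comm
    _ ≤ (s.image g).card • C := Finset.sum_le_card_nsmul _ _ _ (Finset.forall_mem_image.2 h)

-- The collections depend only on the ancestor of a leaf, of which there are few.
lemma sum_truncMass_ancestor_le (hβ : ∀ j, β j ∈ Set.Ioc (0 : ℝ) (1 / 3)) (hr : 0 < r)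
    (hc : c ∈ Set.Ioc (0 : ℝ) 1) (hK : 0 < K) (hw : w ∈ Set.Icc (0 : ℝ) 1) {N i : ℕ} (hi : i ≤ N)
    {M : (Fin n → ℤ) → Set (ℝ × (Fin n → ℝ))}
    (hM : ∀ k ∈ leaves β N, mass β c (t + i) (M ((coarsen β)^[N - i] k)) ≤ ENNReal.ofReal w) :
    ∑ k ∈ leaves β N, truncMass β r c K (t + N) (gridPoint β r (t + N) x k)
        (M ((coarsen β)^[N - i] k)) ≤
      ENNReal.ofReal
        (15 ^ n * (1 + ((∏ j, β j) ^ (1 - c)) ^ (N - i) / K) * ((∏ j, β j) ^ N)⁻¹ * w) := by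
  classical
  have hB : 0 < ∏ j, β j := Finset.prod_pos fun j _ => (hβ j).1
  have hβ1 : ∀ j, β j ∈ Set.Ioc (0 : ℝ) 1 := fun j => ⟨(hβ j).1, by linarith [(hβ j).2]⟩
  set B := ∏ j, β j
  set b := (1 + (B ^ (1 - c)) ^ (N - i) / K)
  have hb : 0 ≤ b := by positivity
  have hw0 := hw.1
  have hlevel : t + i + (N - i : ℕ) = t + N := by
    rw [Nat.cast_sub hi]
    ring
  have hsum : ∀ k ∈ leaves β N, ∑ l ∈ leaves β N,
      truncMass β r c K (t + N) (gridPoint β r (t + N) x l) (M ((coarsen β)^[N - i] k)) ≤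
      ENNReal.ofReal (5 ^ n * b * (B ^ (N - i))⁻¹ * w) :=
    fun k hk => hlevel ▸ sum_truncMass_le hβ1 hr hc hK hw (hM k hk) (N - i) (leaves β N)
  refine (sum_comp_le_card_image_nsmul
    (F := fun a k => truncMass β r c K (t + N) (gridPoint β r (t + N) x k) (M a)) hsum).trans ?_
  rw [nsmul_eq_mul, ← ENNReal.ofReal_natCast, ← ENNReal.ofReal_mul (by positivity)]
  refine ENNReal.ofReal_le_ofReal ?_
  calc (((leaves β N).image (coarsen β)^[N - i]).card : ℝ) * (5 ^ n * b * (B ^ (N - i))⁻¹ * w)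
      ≤ 3 ^ n * (B ^ i)⁻¹ * (5 ^ n * b * (B ^ (N - i))⁻¹ * w) := by
        gcongr
        exact card_image_coarsen_iterate_le hβ hi
    _ = (3 * 5) ^ n * b * (B ^ i * B ^ (N - i))⁻¹ * w := by
        rw [mul_pow, mul_inv]
        ring
    _ = 15 ^ n * b * (B ^ N)⁻¹ * w := by
        rw [pow_mul_pow_sub _ hi]
        norm_num

lemma sum_truncMass_union_le (hβ : ∀ j, β j ∈ Set.Ioc (0 : ℝ) (1 / 3)) (hr : 0 < r)
    (hc : c ∈ Set.Ioc (0 : ℝ) 1) (hK : K ∈ Set.Ioc (0 : ℝ) 1) (hw : w ∈ Set.Icc (0 : ℝ) 1) {N : ℕ}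
    (hM : mass β c t M ≤ ENNReal.ofReal K) {D : ℕ → (Fin n → ℤ) → Set (ℝ × (Fin n → ℝ))}
    (hD : ∀ i < N, ∀ k ∈ leaves β N,
      mass β c (t + i) (D i ((coarsen β)^[N - i] k)) ≤ ENNReal.ofReal w) :
    ∑ k ∈ leaves β N, truncMass β r c K (t + N) (gridPoint β r (t + N) x k)
        (M ∪ ⋃ i ∈ Finset.range N, D i ((coarsen β)^[N - i] k)) ≤
      ENNReal.ofReal ((5 ^ n * (K + ((∏ j, β j) ^ (1 - c)) ^ N) + 15 ^ n * ∑ i ∈ Finset.range N,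
        w * (1 + ((∏ j, β j) ^ (1 - c)) ^ (N - i) / K)) * ((∏ j, β j) ^ N)⁻¹) := by
  have hB : 0 < ∏ j, β j := Finset.prod_pos fun j _ => (hβ j).1
  have hβ1 : ∀ j, β j ∈ Set.Ioc (0 : ℝ) 1 := fun j => ⟨(hβ j).1, by linarith [(hβ j).2]⟩
  have hK0 := hK.1
  have hw0 := hw.1
  have hfirst := sum_truncMass_le (x := x) hβ1 hr hc hK0 ⟨hK0.le, hK.2⟩ hM N (leaves β N)
  set T := fun k => truncMass β r c K (t + N) (gridPoint β r (t + N) x k)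
  set B := ∏ j, β j
  set V := (B ^ N)⁻¹
  have hV : 0 < V := by positivity
  set a := 5 ^ n * (1 + (B ^ (1 - c)) ^ N / K) * V * K with ha
  set e := fun i => 15 ^ n * (1 + (B ^ (1 - c)) ^ (N - i) / K) * V * w with he
  have he0 : ∀ i ∈ Finset.range N, 0 ≤ e i := fun i _ => by positivity
  have ha0 : 0 ≤ a := by positivity
  calc ∑ k ∈ leaves β N, T k (M ∪ ⋃ i ∈ Finset.range N, D i ((coarsen β)^[N - i] k))
      ≤ ∑ k ∈ leaves β N, (T k M + ∑ i ∈ Finset.range N, T k (D i ((coarsen β)^[N - i] k))) :=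
        Finset.sum_le_sum fun k _ =>
          truncMass_union_le.trans (add_le_add_right (truncMass_biUnion_le _ _) _)
    _ = ∑ k ∈ leaves β N, T k M +
          ∑ i ∈ Finset.range N, ∑ k ∈ leaves β N, T k (D i ((coarsen β)^[N - i] k)) := by
        rw [Finset.sum_add_distrib, Finset.sum_comm]
    _ ≤ ENNReal.ofReal a + ∑ i ∈ Finset.range N, ENNReal.ofReal (e i) :=
        add_le_add hfirst <| Finset.sum_le_sum fun i hi =>
          have hi := Finset.mem_range.1 hi
          sum_truncMass_ancestor_le hβ hr hc hK0 hw hi.le (hD i hi)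
    _ = ENNReal.ofReal (a + ∑ i ∈ Finset.range N, e i) := by
        rw [← ENNReal.ofReal_sum_of_nonneg he0, ENNReal.ofReal_add ha0 (Finset.sum_nonneg he0)]
    _ = ENNReal.ofReal ((5 ^ n * (K + (B ^ (1 - c)) ^ N) +
          15 ^ n * ∑ i ∈ Finset.range N, w * (1 + (B ^ (1 - c)) ^ (N - i) / K)) * V) := by
        rw [ha, he, add_mul, Finset.mul_sum, Finset.sum_mul]
        congr 2
        · field_simp
        · exact Finset.sum_congr rfl fun i _ => by ring

lemma exists_truncMass_lt_one (hβ : ∀ j, β j ∈ Set.Ioc (0 : ℝ) (1 / 3)) (hr : 0 < r)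
    (hc : c ∈ Set.Ioc (0 : ℝ) 1) (hK : K ∈ Set.Ioc (0 : ℝ) 1) (hw : w ∈ Set.Icc (0 : ℝ) 1) {N : ℕ}
    (hnum : 5 ^ n * (K + ((∏ j, β j) ^ (1 - c)) ^ N) + 15 ^ n * ∑ i ∈ Finset.range N,
      w * (1 + ((∏ j, β j) ^ (1 - c)) ^ (N - i) / K) < (1 / 4) ^ n)
    (hM : mass β c t M ≤ ENNReal.ofReal K) {D : ℕ → (Fin n → ℤ) → Set (ℝ × (Fin n → ℝ))}
    (hD : ∀ i < N, ∀ k ∈ leaves β N,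
      mass β c (t + i) (D i ((coarsen β)^[N - i] k)) ≤ ENNReal.ofReal w) :
    ∃ k ∈ leaves β N, truncMass β r c K (t + N) (gridPoint β r (t + N) x k)
      (M ∪ ⋃ i ∈ Finset.range N, D i ((coarsen β)^[N - i] k)) < 1 := by
  have hB : 0 < ∏ j, β j := Finset.prod_pos fun j _ => (hβ j).1
  refine Finset.exists_lt_of_sum_lt <| (sum_truncMass_union_le hβ hr hc hK hw hM hD).trans_lt ?_
  calc ENNReal.ofReal ((5 ^ n * (K + ((∏ j, β j) ^ (1 - c)) ^ N) + 15 ^ n * ∑ i ∈ Finset.range N,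
        w * (1 + ((∏ j, β j) ^ (1 - c)) ^ (N - i) / K)) * ((∏ j, β j) ^ N)⁻¹)
      < ENNReal.ofReal (leaves β N).card := by
        have hcard := le_card_leaves (fun j => (hβ j).1) N
        have hpos : 0 < (1 / 4 : ℝ) ^ n * ((∏ j, β j) ^ N)⁻¹ := by positivity
        rw [ENNReal.ofReal_lt_ofReal_iff (hpos.trans_le hcard)]
        refine lt_of_lt_of_le ?_ hcard
        gcongr
    _ = ∑ _k ∈ leaves β N, 1 := by simp

end Averaging

section Play

variable {c K w : ℝ} {b b' : ℕ → Fin n → ℝ} {m m₀ N i : ℕ} {k : Fin n → ℤ}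
  {σ : (m : ℕ) → (Fin (m + 1) → (Fin n → ℝ)) → Set (ℝ × (Fin n → ℝ))}

/-- The centres `b 0, …, b m` are legal plays of Player I on turns `1, …, m + 1`. -/
def IsPlay (β : Fin n → ℝ) (r : ℝ) (b : ℕ → Fin n → ℝ) (m : ℕ) : Prop :=
  ∀ i < m, gameBox β ((i : ℝ) + 2) r (b (i + 1)) ⊆ gameBox β ((i : ℝ) + 1) r (b i)

/-- The move of Player II on turn `m + 1`, following the strategy `σ` against the centres `b`. -/
def response (σ : (m : ℕ) → (Fin (m + 1) → (Fin n → ℝ)) → Set (ℝ × (Fin n → ℝ)))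
    (b : ℕ → Fin n → ℝ) (m : ℕ) : Set (ℝ × (Fin n → ℝ)) :=
  σ m fun i => b i

/-- The boxes deleted by the strategy `σ` on turns `1, …, m`. -/
def deleted (σ : (m : ℕ) → (Fin (m + 1) → (Fin n → ℝ)) → Set (ℝ × (Fin n → ℝ)))
    (b : ℕ → Fin n → ℝ) (m : ℕ) : Set (ℝ × (Fin n → ℝ)) :=
  ⋃ i ∈ Finset.range m, response σ b i

/-- After turn `m + 1` the centres `b` form a legal play, and the previously deleted boxes which
meet Player I's current box have relative mass at most `K`. -/
def IsSafe (β : Fin n → ℝ) (r c K : ℝ)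
    (σ : (m : ℕ) → (Fin (m + 1) → (Fin n → ℝ)) → Set (ℝ × (Fin n → ℝ)))
    (b : ℕ → Fin n → ℝ) (m : ℕ) : Prop :=
  IsPlay β r b m ∧
    mass β c ((m : ℝ) + 1) (meeting β r ((m : ℝ) + 1) (b m) (deleted σ b m)) ≤ ENNReal.ofReal K

/-- The continuation of the centres `b` after turn `m₀ + 1` which in `N` turns reaches the point
with index `k` of the grid through `b m₀`, passing through the coarsenings of `k`. -/
noncomputable def descent (β : Fin n → ℝ) (r : ℝ) (b : ℕ → Fin n → ℝ) (m₀ N : ℕ)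
    (k : Fin n → ℤ) (m : ℕ) : Fin n → ℝ :=
  if m ≤ m₀ then b m else gridPoint β r ((m : ℝ) + 1) (b m₀) ((coarsen β)^[m₀ + N - m] k)

lemma IsPlay.mono (h : IsPlay β r b m) (hi : i ≤ m) : IsPlay β r b i :=
  fun l hl => h l (hl.trans_le hi)

lemma IsPlay.congr (h : IsPlay β r b m) (hb : ∀ i ≤ m, b i = b' i) : IsPlay β r b' m :=
  fun i hi => hb i hi.le ▸ hb (i + 1) hi ▸ h i hi

lemma IsPlay.gameBox_subset (h : IsPlay β r b m) (hi : i ≤ m) :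
    gameBox β ((m : ℝ) + 1) r (b m) ⊆ gameBox β ((i : ℝ) + 1) r (b i) := by
  induction m, hi using Nat.le_induction with
  | base => rfl
  | succ m _ ih =>
    have hstep := h m m.lt_succ_self
    rw [← one_add_one_eq_two, ← add_assoc] at hstep
    exact_mod_cast hstep.trans (ih (h.mono m.le_succ))

lemma response_congr (hb : ∀ i ≤ m, b i = b' i) : response σ b m = response σ b' m :=
  congrArg (σ m) (funext fun i => hb i (Nat.lt_succ_iff.1 i.isLt))

lemma deleted_congr (hb : ∀ i ≤ m, b i = b' i) : deleted σ b m = deleted σ b' m :=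
  Set.iUnion₂_congr fun _ hi => response_congr fun l hl =>
    hb l (hl.trans (Finset.mem_range.1 hi).le)

lemma IsSafe.congr (h : IsSafe β r c K σ b m) (hb : ∀ i ≤ m, b i = b' i) :
    IsSafe β r c K σ b' m :=
  ⟨h.1.congr hb, hb m le_rfl ▸ deleted_congr (σ := σ) hb ▸ h.2⟩

lemma isSafe_zero : IsSafe β r c K σ b 0 :=
  ⟨fun _ h => absurd h (Nat.not_lt_zero _), by simp [mass, meeting, deleted]⟩

lemma descent_of_le (hm : m ≤ m₀) : descent β r b m₀ N k m = b m := if_pos hm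

lemma descent_add (hβ : ∀ j, β j ∈ Set.Ioc (0 : ℝ) (1 / 3)) (hk : k ∈ leaves β N) :
    descent β r b m₀ N k (m₀ + i) =
      gridPoint β r ((m₀ : ℝ) + i + 1) (b m₀) ((coarsen β)^[N - i] k) := by
  rcases i.eq_zero_or_pos with rfl | hi
  · rw [Nat.sub_zero, coarsen_iterate_eq_zero hβ hk, gridPoint_zero, add_zero, descent_of_le le_rfl]
  · rw [descent, if_neg (by omega), Nat.add_sub_add_left, Nat.cast_add]

lemma descent_coarsen_iterate (hi : i ≤ N) (hm : m ≤ m₀ + i) :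
    descent β r b m₀ i ((coarsen β)^[N - i] k) m = descent β r b m₀ N k m := by
  rw [descent, descent, ← Function.iterate_add_apply,
    show m₀ + i - m + (N - i) = m₀ + N - m by omega]

lemma isPlay_descent (hβ : ∀ j, β j ∈ Set.Ioc (0 : ℝ) (1 / 3)) (hr : 0 ≤ r)
    (hb : IsPlay β r b m₀) (hk : k ∈ leaves β N) :
    IsPlay β r (descent β r b m₀ N k) (m₀ + N) := by
  intro l hl
  rcases lt_or_ge l m₀ with hlm | hlm
  · rw [descent_of_le hlm.le, descent_of_le hlm]
    exact hb l hlm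
  · obtain ⟨i, rfl⟩ := Nat.exists_eq_add_of_le hlm
    have hsub := gameBox_gridPoint_subset (t := (m₀ : ℝ) + i + 1) (x := b m₀)
      (fun j => ⟨(hβ j).1, by linarith [(hβ j).2]⟩) hr ((coarsen β)^[N - (i + 1)] k)
    rw [← Function.iterate_succ_apply' (coarsen β),
      show (N - (i + 1)).succ = N - i by omega] at hsub
    rw [add_assoc m₀, descent_add hβ hk, descent_add hβ hk, Nat.cast_add, Nat.cast_succ,
      ← add_assoc (m₀ : ℝ), ← one_add_one_eq_two, ← add_assoc]
    exact hsub

lemma IsPlay.meeting_deleted_add_subset (h : IsPlay β r b (m₀ + N)) :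
    meeting β r (((m₀ + N : ℕ) : ℝ) + 1) (b (m₀ + N)) (deleted σ b (m₀ + N)) ⊆
      meeting β r (((m₀ + N : ℕ) : ℝ) + 1) (b (m₀ + N))
        (meeting β r ((m₀ : ℝ) + 1) (b m₀) (deleted σ b m₀) ∪
          ⋃ i ∈ Finset.range N, response σ b (m₀ + i)) := by
  rintro p ⟨hp, hne⟩
  refine ⟨?_, hne⟩
  obtain ⟨i, hi, hp⟩ := Set.mem_iUnion₂.1 hp
  rcases lt_or_ge i m₀ with him | him
  · exact Or.inl ⟨Set.mem_biUnion (Finset.mem_range.2 him) hp,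
      hne.mono (Set.inter_subset_inter_right _ (h.gameBox_subset (Nat.le_add_right m₀ N)))⟩
  · obtain ⟨i, rfl⟩ := Nat.exists_eq_add_of_le him
    have hi : i < N := by simpa using hi
    exact Or.inr (Set.mem_biUnion (Finset.mem_range.2 hi) hp)

lemma IsSafe.exists_extension (hβ : ∀ j, β j ∈ Set.Ioc (0 : ℝ) (1 / 3)) (hr : 0 < r)
    (hc : c ∈ Set.Ioc (0 : ℝ) 1) (hK : K ∈ Set.Ioc (0 : ℝ) 1) (hw : w ∈ Set.Icc (0 : ℝ) 1)
    (hnum : 5 ^ n * (K + ((∏ j, β j) ^ (1 - c)) ^ N) + 15 ^ n * ∑ i ∈ Finset.range N,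
      w * (1 + ((∏ j, β j) ^ (1 - c)) ^ (N - i) / K) < (1 / 4) ^ n)
    (hσ : ∀ b m, IsPlay β r b m → mass β c ((m : ℝ) + 1) (response σ b m) ≤ ENNReal.ofReal w)
    (hb : IsSafe β r c K σ b m₀) :
    ∃ b', (∀ i ≤ m₀, b' i = b i) ∧ IsSafe β r c K σ b' (m₀ + N) := by
  let D := fun i κ => response σ (descent β r b m₀ i κ) (m₀ + i)
  have hD : ∀ i ≤ N, ∀ k, D i ((coarsen β)^[N - i] k) =
      response σ (descent β r b m₀ N k) (m₀ + i) :=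
    fun i hi k => response_congr fun m hm => descent_coarsen_iterate hi hm
  obtain ⟨k, hk, hlt⟩ := exists_truncMass_lt_one (x := b m₀) (D := D) hβ hr hc hK hw hnum hb.2
    fun i hi k hk => by
      rw [hD i hi.le, add_right_comm]
      exact_mod_cast hσ _ _ ((isPlay_descent hβ hr.le hb.1 hk).mono (by omega))
  set b' := descent β r b m₀ N k with hb'
  have hagree : ∀ i ≤ m₀, b' i = b i := fun i hi => descent_of_le hi
  have hplay : IsPlay β r b' (m₀ + N) := isPlay_descent hβ hr.le hb.1 hk
  refine ⟨b', hagree, hplay, ?_⟩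
  have hmeet := hplay.meeting_deleted_add_subset (σ := σ)
  rw [deleted_congr hagree, hagree m₀ le_rfl, Set.iUnion₂_congr fun i hi =>
    (hD i (Finset.mem_range.1 hi).le k).symm] at hmeet
  have hlevel : (m₀ : ℝ) + 1 + N = ((m₀ + N : ℕ) : ℝ) + 1 := by push_cast; ring
  have hend : gridPoint β r ((m₀ : ℝ) + 1 + N) (b m₀) k = b' (m₀ + N) := by
    rw [hb', descent_add hβ hk, Nat.sub_self, Function.iterate_zero_apply, add_right_comm]
  rw [hend, hlevel] at hlt
  exact (mass_mono hmeet).trans (mass_meeting_le_of_truncMass_lt_one hK.1 hlt)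

end Play

section Limit

variable {c K w : ℝ} {b : ℕ → Fin n → ℝ} {N : ℕ}
  {σ : (m : ℕ) → (Fin (m + 1) → (Fin n → ℝ)) → Set (ℝ × (Fin n → ℝ))}

lemma exists_forall_of_extend {E : Type*} {P : ℕ → (ℕ → E) → Prop} {a : ℕ → ℕ}
    (ha : StrictMono a) (hcongr : ∀ k b b', (∀ i ≤ a k, b i = b' i) → P k b → P k b')
    (hext : ∀ k b, P k b → ∃ b', (∀ i ≤ a k, b' i = b i) ∧ P (k + 1) b')
    {b₀ : ℕ → E} (h₀ : P 0 b₀) : ∃ b, (∀ i ≤ a 0, b i = b₀ i) ∧ ∀ k, P k b := by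
  choose! ext hagree hP using hext
  let F : ℕ → ℕ → E := fun k => k.rec b₀ ext
  have hF : ∀ k, P k (F k) := fun k => k.rec h₀ fun k ih => hP k _ ih
  have hstable : ∀ {k l}, k ≤ l → ∀ i ≤ a k, F l i = F k i := by
    intro k l hkl
    induction l, hkl using Nat.le_induction with
    | base => exact fun _ _ => rfl
    | succ l hkl ih =>
      exact fun i hi => (hagree l _ (hF l) i (hi.trans (ha.monotone hkl))).trans (ih i hi)
  have hdiag : ∀ k, ∀ i ≤ a k, F i i = F k i := fun k i hi =>
    (le_total i k).elim (fun h => (hstable h i (ha.id_le i)).symm) fun h => hstable h i hi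
  exact ⟨fun i => F i i, hdiag 0, fun k => hcongr k _ _ (fun i hi => (hdiag k i hi).symm) (hF k)⟩

lemma exists_forall_isSafe (hβ : ∀ j, β j ∈ Set.Ioc (0 : ℝ) (1 / 3)) (hr : 0 < r)
    (hc : c ∈ Set.Ioc (0 : ℝ) 1) (hK : K ∈ Set.Ioc (0 : ℝ) 1) (hw : w ∈ Set.Icc (0 : ℝ) 1)
    (hN : 0 < N)
    (hnum : 5 ^ n * (K + ((∏ j, β j) ^ (1 - c)) ^ N) + 15 ^ n * ∑ i ∈ Finset.range N,
      w * (1 + ((∏ j, β j) ^ (1 - c)) ^ (N - i) / K) < (1 / 4) ^ n)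
    (hσ : ∀ b m, IsPlay β r b m → mass β c ((m : ℝ) + 1) (response σ b m) ≤ ENNReal.ofReal w)
    (y : Fin n → ℝ) : ∃ b, b 0 = y ∧ ∀ k, IsSafe β r c K σ b (k * N) := by
  obtain ⟨b, hb, hsafe⟩ := exists_forall_of_extend (P := fun k b => IsSafe β r c K σ b (k * N))
    (strictMono_mul_right_of_pos hN) (fun k b b' hbb' h => h.congr hbb')
    (fun k b h => by
      rw [Nat.succ_mul]
      exact h.exists_extension hβ hr hc hK hw hnum hσ)
    (b₀ := fun _ => y) (by rw [zero_mul]; exact isSafe_zero)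
  exact ⟨b, hb 0 (Nat.zero_le _), hsafe⟩

-- A deleted box containing `x` would eventually be larger than Player I's boxes around `x`.
lemma notMem_gameBox_of_forall_isSafe (hβ : ∀ j, β j ∈ Set.Ioc (0 : ℝ) 1) (hc : 0 ≤ c)
    (hK : K ∈ Set.Ico (0 : ℝ) 1) (hN : 0 < N) (hsafe : ∀ k, IsSafe β r c K σ b (k * N))
    {x : Fin n → ℝ} (hx : ∀ m : ℕ, x ∈ gameBox β ((m : ℝ) + 1) r (b m)) {m : ℕ}
    {p : ℝ × (Fin n → ℝ)} (hp : p ∈ response σ b m) : x ∉ gameBox β p.1 r p.2 := by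
  intro hxp
  obtain ⟨k, hk⟩ := exists_nat_ge p.1
  set l := max (m + 1) k * N
  have hl : max (m + 1) k ≤ l := Nat.le_mul_of_pos_right _ hN
  have hmeet : p ∈ meeting β r ((l : ℝ) + 1) (b l) (deleted σ b l) :=
    ⟨Set.mem_biUnion (Finset.mem_range.2 ((le_max_left _ _).trans hl)) hp, x, hxp, hx l⟩
  have hlevel : p.1 - ((l : ℝ) + 1) ≤ 0 := by
    have : (k : ℝ) ≤ l := by exact_mod_cast (le_max_right _ _).trans hl
    linarith
  have hle : relVol β ((l : ℝ) + 1) p ^ c ≤ K :=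
    relVol_rpow_le_of_mass_le hK.1 (hsafe _).2 hmeet
  have hge : 1 ≤ relVol β ((l : ℝ) + 1) p := Finset.one_le_prod fun j _ =>
    Real.one_le_rpow_of_pos_of_le_one_of_nonpos (hβ j).1 (hβ j).2 hlevel
  linarith [Real.one_le_rpow hge hc, hK.2]

lemma exists_forall_mem_gameBox (hβ : ∀ j, 0 ≤ β j) (hr : 0 ≤ r) (hb : ∀ m, IsPlay β r b m) :
    ∃ x, ∀ m : ℕ, x ∈ gameBox β ((m : ℝ) + 1) r (b m) := by
  have hcompact : ∀ m : ℕ, IsCompact (gameBox β ((m : ℝ) + 1) r (b m)) := fun m => by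
    rw [gameBox_eq_Icc]
    exact isCompact_Icc
  obtain ⟨x, hx⟩ := IsCompact.nonempty_iInter_of_sequence_nonempty_isCompact_isClosed
    (fun m : ℕ => gameBox β ((m : ℝ) + 1) r (b m))
    (fun m => by exact_mod_cast (hb (m + 1)).gameBox_subset m.le_succ)
    (fun m => ⟨b m, mem_gameBox_self hβ hr⟩) (hcompact 0) fun m => (hcompact m).isClosed
  exact ⟨x, Set.mem_iInter.1 hx⟩

end Limit

section Numerics

variable {w x δ : ℝ} {N : ℕ}

lemma natCast_mul_pow_mul_one_sub_le_one (hx : x ∈ Set.Icc (0 : ℝ) 1) (N : ℕ) :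
    N * x ^ N * (1 - x) ≤ 1 :=
  calc N * x ^ N * (1 - x) = (∑ _i ∈ Finset.range N, x ^ N) * (1 - x) := by simp
    _ ≤ (∑ i ∈ Finset.range N, x ^ i) * (1 - x) := by
      refine mul_le_mul_of_nonneg_right (Finset.sum_le_sum fun i hi => ?_) (sub_nonneg.2 hx.2)
      exact pow_le_pow_of_le_one hx.1 hx.2 (Finset.mem_range.1 hi).le
    _ = 1 - x ^ N := geom_sum_mul_neg x N
    _ ≤ 1 := sub_le_self 1 (pow_nonneg hx.1 N)

lemma sum_pow_sub_mul_one_sub_le_one (hx : x ∈ Set.Icc (0 : ℝ) 1) (N : ℕ) :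
    (∑ i ∈ Finset.range N, x ^ (N - i)) * (1 - x) ≤ 1 :=
  calc (∑ i ∈ Finset.range N, x ^ (N - i)) * (1 - x)
      ≤ (∑ i ∈ Finset.range N, x ^ (N - 1 - i)) * (1 - x) := by
        refine mul_le_mul_of_nonneg_right (Finset.sum_le_sum fun i _ => ?_) (sub_nonneg.2 hx.2)
        exact pow_le_pow_of_le_one hx.1 hx.2 (by omega)
    _ = 1 - x ^ N := by rw [Finset.sum_range_reflect fun i => x ^ i, geom_sum_mul_neg]
    _ ≤ 1 := sub_le_self 1 (pow_nonneg hx.1 N)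

lemma one_le_floor_div (hw : 0 < w) (hδ : δ ∈ Set.Ioo (0 : ℝ) 1) (hx : 0 ≤ x)
    (h : w ≤ δ ^ 2 * (1 - x)) : 1 ≤ ⌊δ / w⌋₊ := by
  refine Nat.one_le_floor_iff .. |>.2 ((one_le_div hw).2 ?_)
  nlinarith [hδ.1, hδ.2, mul_nonneg (sq_nonneg δ) hx]

lemma pow_floor_div_le (hw : 0 < w) (hδ : δ ∈ Set.Ioo (0 : ℝ) 1) (hx : x ∈ Set.Icc (0 : ℝ) 1)
    (h : w ≤ δ ^ 2 * (1 - x)) : x ^ ⌊δ / w⌋₊ ≤ 2 * δ := by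
  have hδ0 := hδ.1
  set N := ⌊δ / w⌋₊
  have hN1 : (1 : ℝ) ≤ N := by exact_mod_cast one_le_floor_div hw hδ hx.1 h
  have hNw : δ ≤ 2 * (N * w) := by
    have := (div_lt_iff₀ hw).1 (Nat.lt_floor_add_one (δ / w))
    nlinarith
  have hN : δ ≤ 2 * δ ^ 2 * (N * (1 - x)) := by nlinarith
  have hpow := pow_nonneg hx.1 N
  nlinarith [natCast_mul_pow_mul_one_sub_le_one hx N]

lemma sum_range_floor_div_le (hw : 0 < w) (hδ : δ ∈ Set.Ioo (0 : ℝ) 1)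
    (hx : x ∈ Set.Icc (0 : ℝ) 1) (h : w ≤ δ ^ 2 * (1 - x)) :
    ∑ i ∈ Finset.range ⌊δ / w⌋₊, w * (1 + x ^ (⌊δ / w⌋₊ - i) / δ) ≤ 2 * δ := by
  have hδ0 := hδ.1
  set N := ⌊δ / w⌋₊
  have hNw : N * w ≤ δ := (le_div_iff₀ hw).1 (Nat.floor_le (by positivity))
  have hgeom : w * (∑ i ∈ Finset.range N, x ^ (N - i)) ≤ δ ^ 2 := by
    have hsum : 0 ≤ ∑ i ∈ Finset.range N, x ^ (N - i) :=
      Finset.sum_nonneg fun i _ => pow_nonneg hx.1 _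
    nlinarith [sum_pow_sub_mul_one_sub_le_one hx N, mul_le_mul_of_nonneg_right h hsum]
  calc ∑ i ∈ Finset.range N, w * (1 + x ^ (N - i) / δ)
      = N * w + w * (∑ i ∈ Finset.range N, x ^ (N - i)) / δ := by
        rw [← Finset.mul_sum, Finset.sum_add_distrib, ← Finset.sum_div]
        simp
        ring
    _ ≤ δ + δ ^ 2 / δ := by gcongr
    _ = 2 * δ := by field_simp; ring

lemma lt_one_fourth_pow_of_floor_div (hn : n ≠ 0) (hw : 0 < w) (hδ0 : 0 < δ)
    (hδ : 3 * 60 ^ n * δ < 1) (hx : x ∈ Set.Icc (0 : ℝ) 1) (h : w ≤ δ ^ 2 * (1 - x)) :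
    5 ^ n * (δ + x ^ ⌊δ / w⌋₊) +
      15 ^ n * ∑ i ∈ Finset.range ⌊δ / w⌋₊, w * (1 + x ^ (⌊δ / w⌋₊ - i) / δ) < (1 / 4) ^ n := by
  have hδ1 : δ ∈ Set.Ioo (0 : ℝ) 1 :=
    ⟨hδ0, by nlinarith [one_le_pow₀ (n := n) (show (1 : ℝ) ≤ 60 by norm_num)]⟩
  have h35 : (3 : ℝ) * 5 ^ n ≤ 15 ^ n := by
    have := le_self_pow₀ (show (1 : ℝ) ≤ 3 by norm_num) hn
    calc (3 : ℝ) * 5 ^ n ≤ 3 ^ n * 5 ^ n := by gcongr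
      _ = 15 ^ n := by rw [← mul_pow]; norm_num
  calc 5 ^ n * (δ + x ^ ⌊δ / w⌋₊) +
        15 ^ n * ∑ i ∈ Finset.range ⌊δ / w⌋₊, w * (1 + x ^ (⌊δ / w⌋₊ - i) / δ)
      ≤ 5 ^ n * (δ + 2 * δ) + 15 ^ n * (2 * δ) := by
        gcongr
        · exact pow_floor_div_le hw hδ1 hx h
        · exact sum_range_floor_div_le hw hδ1 hx h
    _ ≤ (1 / 4) ^ n * (3 * 60 ^ n * δ) := by
        have h15 : (1 / 4 : ℝ) ^ n * 60 ^ n = 15 ^ n := by rw [← mul_pow]; norm_num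
        nlinarith
    _ < (1 / 4) ^ n := mul_lt_of_lt_one_right (by positivity) hδ

lemma three_mul_sixty_pow_mul_lt_one (hn : n ≠ 0) (hN : N ≠ 0)
    (hβ : ∀ j, β j ∈ Set.Ioo (0 : ℝ) (1 / 5)) (hδ : 0 < δ)
    (h : (3 : ℝ)⁻¹ ^ n * ∏ j, (1 - 5 * β j ^ N) > 8 ^ n * (1 + 2 ^ (2 * n + 1)) * δ) :
    3 * 60 ^ n * δ < 1 := by
  have hfactor : ∀ j, 1 - 5 * β j ^ N ∈ Set.Icc (0 : ℝ) 1 := fun j => by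
    obtain ⟨h0, h5⟩ := hβ j
    have := pow_le_of_le_one h0.le (by linarith) hN
    have := pow_pos h0 N
    constructor <;> linarith
  have hprod : ∏ j, (1 - 5 * β j ^ N) ≤ 1 :=
    Finset.prod_le_one (fun j _ => (hfactor j).1) fun j _ => (hfactor j).2
  have h32 : (3 : ℝ) * 60 ^ n ≤ 2 * 96 ^ n := by
    have hbase : (3 / 2 : ℝ) ≤ (96 / 60) ^ n :=
      (by norm_num : (3 / 2 : ℝ) ≤ 96 / 60).trans (le_self_pow₀ (by norm_num) hn)
    rw [div_pow, le_div_iff₀ (by positivity)] at hbase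
    linarith
  calc 3 * 60 ^ n * δ ≤ 2 * 96 ^ n * δ := by gcongr
    _ = 3 ^ n * (8 ^ n * 2 ^ (2 * n + 1) * δ) := by
        rw [pow_succ, pow_mul, show (96 : ℝ) = 3 * 8 * 2 ^ 2 by norm_num, mul_pow, mul_pow]
        ring
    _ ≤ 3 ^ n * (8 ^ n * (1 + 2 ^ (2 * n + 1)) * δ) := by
        gcongr
        exact le_add_of_nonneg_left zero_le_one
    _ < 3 ^ n * ((3 : ℝ)⁻¹ ^ n * ∏ j, (1 - 5 * β j ^ N)) := by gcongr
    _ = ∏ j, (1 - 5 * β j ^ N) := by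
        rw [← mul_assoc, ← mul_pow, mul_inv_cancel₀ three_ne_zero, one_pow, one_mul]
    _ ≤ 1 := hprod

lemma one_le_floor_div_rpow_mul {α c : ℝ} (hα : 0 < α) (hc : c ∈ Set.Ioc (0 : ℝ) 1)
    (hδ : δ ∈ Set.Ioc (0 : ℝ) 1) (hx : 0 ≤ x) (h : 2 * α ^ c ≤ δ ^ 2 * (1 - x)) :
    1 ≤ ⌊δ / ((2 : ℝ) ^ (1 / c) * α)⌋₊ := by
  have hδ0 := hδ.1
  rw [Nat.one_le_floor_iff, one_le_div (by positivity),
    ← Real.rpow_le_rpow_iff (by positivity) hδ0.le hc.1]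
  calc ((2 : ℝ) ^ (1 / c) * α) ^ c = 2 * α ^ c := by
        rw [Real.mul_rpow (by positivity) hα.le, one_div, Real.rpow_inv_rpow zero_le_two hc.1.ne']
    _ ≤ δ ^ (1 : ℝ) := by
        rw [Real.rpow_one]
        nlinarith [hδ.2, mul_nonneg (sq_nonneg δ) hx]
    _ ≤ δ ^ c := Real.rpow_le_rpow_of_exponent_ge hδ0 hδ.2 hc.2

end Numerics

end PotentialGame

section Winning

open PotentialGame

variable {n : ℕ} {β : Fin n → ℝ} {α c ρ₂ ρ₁ : ℝ} {m : ℕ} {S : Set (Fin n → ℝ)}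

lemma legalMove_iff (hβ : ∀ j, 0 < β j) (hα : 0 ≤ α) (hc : 0 < c) {M : Set (ℝ × (Fin n → ℝ))} :
    LegalMove β α c m M ↔ M.Countable ∧ (∀ p ∈ M, 1 ≤ p.1) ∧
      mass β c ((m : ℝ) + 1) M ≤ ENNReal.ofReal (α ^ c) := by
  set W := ∏ j, β j ^ ((m : ℝ) + 1)
  have hW : 0 < W := Finset.prod_pos fun j _ => Real.rpow_pos_of_pos (hβ j) _
  have hterm : ∀ p : M, ENNReal.ofReal ((∏ j, β j ^ p.1.1) ^ c) =
      ENNReal.ofReal (W ^ c) * ENNReal.ofReal (relVol β ((m : ℝ) + 1) p ^ c) := fun p => by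
    rw [← ENNReal.ofReal_mul (by positivity), ← Real.mul_rpow hW.le (relVol_pos hβ).le, relVol,
      ← Finset.prod_mul_distrib]
    simp_rw [← Real.rpow_add (hβ _), add_sub_cancel]
  have hsum : ∑' p : M, ENNReal.ofReal ((∏ j, β j ^ p.1.1) ^ c) =
      ENNReal.ofReal (W ^ c) * mass β c ((m : ℝ) + 1) M := by
    rw [tsum_congr hterm, ENNReal.tsum_mul_left, mass]
  have hbound : ENNReal.ofReal ((α * W) ^ c) =
      ENNReal.ofReal (W ^ c) * ENNReal.ofReal (α ^ c) := by
    rw [mul_comm α, Real.mul_rpow hW.le hα, ENNReal.ofReal_mul (by positivity)]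
  rw [LegalMove, if_pos hc, hsum, hbound, ENNReal.mul_le_mul_iff_right
    (ENNReal.ofReal_pos.2 (by positivity)).ne' ENNReal.ofReal_ne_top]

lemma LegalMove.preimage_add {M : Set (ℝ × (Fin n → ℝ))} (h : LegalMove β α c m M)
    (v : Fin n → ℝ) : LegalMove β α c m (Prod.map id (· + v) ⁻¹' M) := by
  have hinj : Function.Injective (Prod.map id (· + v) : ℝ × (Fin n → ℝ) → ℝ × (Fin n → ℝ)) :=
    Function.injective_id.prodMap (add_left_injective v)
  obtain ⟨hcount, hone, hsum⟩ := h
  refine ⟨hcount.preimage hinj, fun p hp => hone (p.1, p.2 + v) hp, ?_⟩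
  split_ifs at hsum ⊢ with hc
  · exact (ENNReal.tsum_comp_le_tsum_of_injective
      (Set.MapsTo.restrict_inj (Set.mapsTo_preimage _ M) |>.2 hinj.injOn) _).trans hsum
  · exact ⟨hsum.1.preimage hinj, fun p hp => hsum.2 (p.1, p.2 + v) hp⟩

lemma LegalMove.iUnion {ι : Type*} [Countable ι] {α : ι → ℝ} {a : ℝ}
    {M : ι → Set (ℝ × (Fin n → ℝ))} (hβ : ∀ j, 0 < β j) (hc : 0 < c) (hα : ∀ i, 0 ≤ α i)
    (ha : 0 ≤ a) (hsum : ∑' i, ENNReal.ofReal (α i ^ c) ≤ ENNReal.ofReal (a ^ c))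
    (h : ∀ i, LegalMove β (α i) c m (M i)) : LegalMove β a c m (⋃ i, M i) := by
  have h := fun i => (legalMove_iff hβ (hα i) hc).1 (h i)
  refine (legalMove_iff hβ ha hc).2 ⟨Set.countable_iUnion fun i => (h i).1, fun p hp => ?_, ?_⟩
  · obtain ⟨i, hi⟩ := Set.mem_iUnion.1 hp
    exact (h i).2.1 p hi
  · exact (ENNReal.tsum_iUnion_le_tsum
      (fun p => ENNReal.ofReal (relVol β ((m : ℝ) + 1) p ^ c)) M).trans <|
        (ENNReal.tsum_le_tsum fun i => (h i).2.2).trans hsum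

lemma IsWinning.preimage_add (h : IsWinning β α c ρ₂ ρ₁ S) (v : Fin n → ℝ) :
    IsWinning β α c ρ₂ ρ₁ ((· + v) ⁻¹' S) := by
  obtain ⟨σ, hlegal, hwin⟩ := h
  refine ⟨fun r m b => Prod.map id (· + v) ⁻¹' σ r m fun i => b i + v,
    fun r m b hr₂ hr₁ hb => (hlegal r m _ hr₂ hr₁ fun i =>
      gameBox_add_subset_gameBox_add v (hb i)).preimage_add v,
    fun r b hr₂ hr₁ hb x hx hdel => ?_⟩
  refine hwin r (fun m => b m + v) hr₂ hr₁ (fun m => gameBox_add_subset_gameBox_add v (hb m))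
    (x + v) (fun m => (add_mem_gameBox_add v).2 (hx m)) fun hmem => hdel ?_
  simp only [Set.mem_iUnion] at hmem ⊢
  obtain ⟨m, p, hp, hxp⟩ := hmem
  rw [← sub_add_cancel p.2 v, add_mem_gameBox_add] at hxp
  exact ⟨m, (p.1, p.2 - v), by simpa using hp, hxp⟩

lemma IsWinning.iInter {ι : Type*} [Countable ι] {α : ι → ℝ} {a : ℝ}
    {S : ι → Set (Fin n → ℝ)} (hβ : ∀ j, 0 < β j) (hc : 0 < c) (hα : ∀ i, 0 ≤ α i) (ha : 0 ≤ a)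
    (hsum : ∑' i, ENNReal.ofReal (α i ^ c) ≤ ENNReal.ofReal (a ^ c))
    (h : ∀ i, IsWinning β (α i) c ρ₂ ρ₁ (S i)) : IsWinning β a c ρ₂ ρ₁ (⋂ i, S i) := by
  choose σ hlegal hwin using h
  refine ⟨fun r m b => ⋃ i, σ i r m b,
    fun r m b hr₂ hr₁ hb => .iUnion hβ hc hα ha hsum fun i => hlegal i r m b hr₂ hr₁ hb,
    fun r b hr₂ hr₁ hb x hx hdel => Set.mem_iInter.2 fun i =>
      hwin i r b hr₂ hr₁ hb x hx fun hmem => hdel ?_⟩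
  simp only [Set.mem_iUnion] at hmem ⊢
  obtain ⟨m, p, hp, hxp⟩ := hmem
  exact ⟨m, p, ⟨i, hp⟩, hxp⟩

lemma IsWinning.exists_mem_gameBox {r δ : ℝ} (hβ : ∀ j, β j ∈ Set.Ioc (0 : ℝ) (1 / 3))
    (hα : 0 < α) (hc : 0 < c) (hr : 0 < r) (hr₂ : ρ₂ ≤ r) (hr₁ : r ≤ ρ₁) (hδ0 : 0 < δ)
    (hδ : 3 * 60 ^ n * δ < 1) (h : α ^ c ≤ δ ^ 2 * (1 - (∏ j, β j) ^ (1 - c)))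
    (hS : IsWinning β α c ρ₂ ρ₁ S) (y : Fin n → ℝ) : ∃ x ∈ S, x ∈ gameBox β 1 r y := by
  have hβ1 : ∀ j, β j ∈ Set.Ioc (0 : ℝ) 1 := fun j => ⟨(hβ j).1, by linarith [(hβ j).2]⟩
  have hB0 : 0 < ∏ j, β j := Finset.prod_pos fun j _ => (hβ j).1
  have hB1 : ∏ j, β j ≤ 1 := Finset.prod_le_one (fun j _ => (hβ1 j).1.le) fun j _ => (hβ1 j).2
  have hw : 0 < α ^ c := Real.rpow_pos_of_pos hα c
  have hx1 : (∏ j, β j) ^ (1 - c) < 1 :=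
    sub_pos.1 (pos_of_mul_pos_right (hw.trans_le h) (by positivity))
  have hc1 : c ≤ 1 := by
    by_contra! hc1
    exact hx1.not_ge (Real.one_le_rpow_of_pos_of_le_one_of_nonpos hB0 hB1 (by linarith))
  have hn : n ≠ 0 := by
    rintro rfl
    simp at hx1
  have hx : (∏ j, β j) ^ (1 - c) ∈ Set.Icc (0 : ℝ) 1 := ⟨by positivity, hx1.le⟩
  have hδ1 : δ < 1 := by nlinarith [one_le_pow₀ (n := n) (show (1 : ℝ) ≤ 60 by norm_num)]
  have hw1 : α ^ c ≤ 1 := by nlinarith [hx.1]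
  have hN := one_le_floor_div hw ⟨hδ0, hδ1⟩ hx.1 h
  obtain ⟨σ, hlegal, hwin⟩ := hS
  have hmass : ∀ b m, IsPlay β r b m →
      mass β c ((m : ℝ) + 1) (response (σ r) b m) ≤ ENNReal.ofReal (α ^ c) := fun b m hb =>
    ((legalMove_iff (fun j => (hβ j).1) hα.le hc).1 (hlegal r m _ hr₂ hr₁ fun i => hb i i.2)).2.2
  obtain ⟨b, rfl, hsafe⟩ := exists_forall_isSafe hβ hr ⟨hc, hc1⟩ ⟨hδ0, hδ1.le⟩ ⟨hw.le, hw1⟩ hN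
    (lt_one_fourth_pow_of_floor_div hn hw hδ0 hδ hx h) hmass y
  have hplay : ∀ m, IsPlay β r b m := fun m =>
    (hsafe m).1.mono (Nat.le_mul_of_pos_right m hN)
  obtain ⟨x, hx⟩ := exists_forall_mem_gameBox (fun j => (hβ j).1.le) hr.le hplay
  refine ⟨x, hwin r b hr₂ hr₁ (fun m => hplay (m + 1) m m.lt_succ_self) x hx ?_, ?_⟩
  · simp only [Set.mem_iUnion, not_exists]
    exact fun m p hp => notMem_gameBox_of_forall_isSafe hβ1 hc.le ⟨hδ0.le, hδ1⟩ hN hsafe hx hp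
  · simpa using hx 0

theorem winning_set_distances_general {ι : Type*} [Fintype ι] {δ : ℝ}
    (hβ : ∀ j, β j ∈ Set.Ioc (0 : ℝ) (1 / 3)) (hα : 0 < α) (hc : 0 < c) (hρ₂ : 0 < ρ₂)
    (hδ0 : 0 < δ) (hδ : 3 * 60 ^ n * δ < 1)
    (h : Fintype.card ι * α ^ c ≤ δ ^ 2 * (1 - (∏ j, β j) ^ (1 - c)))
    (hS : S ∈ winFamily β α c ρ₂) (y : Fin n → ℝ) {v : ι → Fin n → ℝ}
    (hv : ∀ i j, |v i j| ≤ (1 - β j) * ρ₂) :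
    ∃ x, ∀ i, x + v i ∈ S ∩ Metric.closedBall y ρ₂ := by
  rcases isEmpty_or_nonempty ι with hι | hι
  · exact ⟨y, hι.elim⟩
  obtain ⟨ρ₁, hρ, hS⟩ := hS
  set a := (Fintype.card ι * α ^ c) ^ c⁻¹
  have hcard : 0 < (Fintype.card ι : ℝ) := by exact_mod_cast Fintype.card_pos
  have ha : 0 < a := by positivity
  have hac : a ^ c = Fintype.card ι * α ^ c := Real.rpow_inv_rpow (by positivity) hc.ne'
  have hinter : IsWinning β a c ρ₂ ρ₁ (⋂ i, (· + v i) ⁻¹' S) :=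
    .iInter (fun j => (hβ j).1) hc (fun _ => hα.le) ha.le
      (by rw [hac, tsum_fintype, ENNReal.ofReal_mul hcard.le]; simp) fun i => hS.preimage_add (v i)
  obtain ⟨x, hxS, hxy⟩ := hinter.exists_mem_gameBox hβ ha hc hρ₂ le_rfl hρ hδ0 hδ (hac ▸ h) y
  refine ⟨x, fun i => ⟨Set.mem_iInter.1 hxS i, ?_⟩⟩
  rw [Metric.mem_closedBall, dist_pi_le_iff hρ₂.le]
  intro j
  have hxj := hxy j
  rw [Real.rpow_one] at hxj
  calc dist ((x + v i) j) (y j) = |x j - y j + v i j| := by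
        rw [Real.dist_eq, Pi.add_apply]
        ring_nf
    _ ≤ |x j - y j| + |v i j| := abs_add_le _ _
    _ ≤ β j * ρ₂ + (1 - β j) * ρ₂ := add_le_add hxj (hv i j)
    _ = ρ₂ := by ring

end Winning

/-- **Distance sets of winning sets.**  Let `A` be the diagonal `(n × n)`-matrix with diagonal
entries `β j ∈ (0, 1/5)`, `β_max = max_j β_j`, `α, c ∈ (0,1)` and `ρ₂ > 0`.  Assume there is a
`δ ∈ (0,1)` with `2 α^c ≤ δ²(1 − (∏_j β_j)^{1−c})` and
`3^{−n} ∏_j (1 − 5 β_j^{⌊δ/(2^{1/c} α)⌋}) > 8^n (1 + 2^{2n+1}) δ` (i.e. `M(α,A,c,ρ₂) ≥ 2`).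
Then for all `η⁽ʲ⁾ ∈ [0,1]`, all `λ ∈ (0, (1 − β_max) ρ₂)`, all `y ∈ ℝⁿ` and all
`S ∈ 𝒮(α, A, c, ρ₂)`, the set `S ∩ B[y, ρ₂]` contains two points `x, x'` with
`|x⁽ʲ⁾ − x'⁽ʲ⁾| = η⁽ʲ⁾ λ` for every `j`. -/
theorem winning_set_distances {n : ℕ} (hn : 0 < n)
    (β : Fin n → ℝ) (hβ : ∀ j, β j ∈ Set.Ioo (0 : ℝ) (1 / 5))
    (βmax : ℝ) (hβmax : IsGreatest (Set.range β) βmax)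
    (α c : ℝ) (hα : α ∈ Set.Ioo (0 : ℝ) 1) (hc : c ∈ Set.Ioo (0 : ℝ) 1)
    (ρ₂ : ℝ) (hρ₂ : 0 < ρ₂) (δ : ℝ) (hδ : δ ∈ Set.Ioo (0 : ℝ) 1)
    (h1 : 2 * α ^ c ≤ δ ^ 2 * (1 - (∏ j, β j) ^ (1 - c)))
    (h2 : (3 : ℝ)⁻¹ ^ n * ∏ j, (1 - 5 * β j ^ ⌊δ / ((2 : ℝ) ^ (1 / c) * α)⌋₊)
            > 8 ^ n * (1 + 2 ^ (2 * n + 1)) * δ)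
    (η : Fin n → ℝ) (hη : ∀ j, η j ∈ Set.Icc (0 : ℝ) 1)
    (lam : ℝ) (hlam : lam ∈ Set.Ioo 0 ((1 - βmax) * ρ₂))
    (y : Fin n → ℝ) (S : Set (Fin n → ℝ)) (hS : S ∈ winFamily β α c ρ₂) :
    ∃ x ∈ S ∩ Metric.closedBall y ρ₂, ∃ x' ∈ S ∩ Metric.closedBall y ρ₂,
      ∀ j, |x j - x' j| = η j * lam := by
  have hN := PotentialGame.one_le_floor_div_rpow_mul hα.1 ⟨hc.1, hc.2.le⟩ ⟨hδ.1, hδ.2.le⟩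
    (Real.rpow_nonneg (Finset.prod_nonneg fun j _ => (hβ j).1.le) (1 - c)) h1
  have hshift : ∀ i j, |(![0, fun j => η j * lam] : Fin 2 → Fin n → ℝ) i j| ≤ (1 - β j) * ρ₂ := by
    refine Fin.forall_fin_two.2 ⟨fun j => ?_, fun j => ?_⟩
    · simpa using mul_nonneg (by linarith [(hβ j).2]) hρ₂.le
    · have hβj : β j ≤ βmax := hβmax.2 ⟨j, rfl⟩
      calc |η j * lam| = η j * lam := abs_of_nonneg (mul_nonneg (hη j).1 hlam.1.le)
        _ ≤ lam := mul_le_of_le_one_left hlam.1.le (hη j).2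
        _ ≤ (1 - βmax) * ρ₂ := hlam.2.le
        _ ≤ (1 - β j) * ρ₂ := by gcongr
  obtain ⟨x, hx⟩ := winning_set_distances_general
    (fun j => ⟨(hβ j).1, by linarith [(hβ j).2]⟩) hα.1 hc.1 hρ₂ hδ.1
    (PotentialGame.three_mul_sixty_pow_mul_lt_one hn.ne' (by omega) hβ hδ.1 h2)
    (by simpa using h1) hS y hshift
  refine ⟨_, hx 0, _, hx 1, fun j => ?_⟩
  simpa using abs_of_nonneg (mul_nonneg (hη j).1 hlam.1.le)
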